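/- arXiv:2111.04860 — 3 statements merged into one kernel-verified Lean document; each statement's English description precedes it below -/
import Mathlib

section
/- Let L, M ≥ 1 and N = L·M. Let x : Fin N → ℂ be a discrete signal and let X : ℤ → ℂ denote its discrete Fourier transform, X(k) = Σ_{j=0}^{N-1} x(j)·exp(−2πi·j·k/N). Let y : Fin M → ℂ be the downsampled signal y(m) = x(m·L), and let Y : ℤ → ℂ be its discrete Fourier transform, Y(k) = Σ_{m=0}^{M-1} y(m)·exp(−2πi·m·k/M). Then for every integer k, Y(k) = (1/L) · Σ_{l=0}^{L-1} X(k + l·M); that is, the DFT of the L-fold downsampled signal equals 1/L times the L-fold alias of the DFT of the original signal. -/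
/-!
Shifting the frequency by `l * M` multiplies the `j`-th term of the transform by `ω ^ (j * l)`,
where `ω` is a primitive `L`-th root of unity. By orthogonality, summing over `l < L` multiplies
the terms with `L ∣ j` by `L` and annihilates the others; what survives is the transform of the
downsampled signal.
-/

open Finset

theorem sum_range_pow_pow_primitiveRoot {R : Type*} [CommRing R] [IsDomain R] {ω : R} {L : ℕ}
    (hω : IsPrimitiveRoot ω L) (j : ℕ) :
    ∑ l ∈ range L, (ω ^ j) ^ l = if L ∣ j then (L : R) else 0 := by
  split_ifs with hj
  · simp [(hω.pow_eq_one_iff_dvd j).2 hj]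
  · have hne : ω ^ j - 1 ≠ 0 := sub_ne_zero.2 fun h => hj (hω.dvd_of_pow_eq_one j h)
    have hpow : (ω ^ j) ^ L = 1 := by rw [pow_right_comm, hω.pow_eq_one, one_pow]
    exact (mul_eq_zero.1 (by rw [mul_geom_sum, hpow, sub_self])).resolve_left hne

/-- The `L`-fold downsampling `m ↦ x (m * L)` of a signal of length `L * M`. -/
def downsample {E : Type*} {L M : ℕ} (hL : 0 < L) (x : Fin (L * M) → E) : Fin M → E :=
  fun m => x ⟨m * L, by rw [mul_comm L]; exact Nat.mul_lt_mul_of_pos_right m.isLt hL⟩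

/-- The `L`-fold aliasing of a spectrum with shift `M`: the sum of its translates by
`0, M, …, (L - 1) * M`. -/
def aliasing {E : Type*} [AddCommMonoid E] (L M : ℕ) (X : ℤ → E) : ℤ → E :=
  fun k => ∑ l ∈ range L, X (k + l * M)

theorem sum_ite_dvd_eq_sum_downsample {E : Type*} [AddCommMonoid E] {L M : ℕ} (hL : 0 < L)
    (f : Fin (L * M) → E) :
    ∑ j : Fin (L * M), (if L ∣ (j : ℕ) then f j else 0) = ∑ m, downsample hL f m := by
  rw [← sum_filter]
  refine sum_bij' (fun j _ => ⟨j / L, Nat.div_lt_of_lt_mul j.isLt⟩)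
    (fun m _ => downsample hL id m) (by simp) (by simp [downsample]) ?leftInv ?rightInv ?map
  case leftInv =>
    intro j hj
    exact Fin.ext (Nat.div_mul_cancel (mem_filter.1 hj).2)
  case rightInv =>
    intro m _
    exact Fin.ext (Nat.mul_div_cancel _ hL)
  case map =>
    intro j hj
    exact congrArg f (Fin.ext (Nat.div_mul_cancel (mem_filter.1 hj).2).symm)

section DFT

variable {K E : Type*} [Field K] [AddCommGroup E] [Module K E]

/-- The discrete Fourier transform of `x` with kernel `ζ ^ (j * k)`. The base `ζ` is a parameter,
so that transforms of different lengths can be compared over any field; the usual transform of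
length `N` has `ζ = exp (-2πi / N)`. -/
def dft {N : ℕ} (ζ : K) (x : Fin N → E) : ℤ → E :=
  fun k => ∑ j : Fin N, ζ ^ ((j : ℤ) * k) • x j

theorem dft_add_mul {N : ℕ} {ζ : K} (hζ : ζ ≠ 0) (x : Fin N → E) (k : ℤ) (l M : ℕ) :
    dft ζ x (k + l * M) = ∑ j : Fin N, ((ζ ^ M) ^ (j : ℕ)) ^ l • ζ ^ ((j : ℤ) * k) • x j := by
  refine sum_congr rfl fun j _ => ?_
  have hshift : ζ ^ ((j : ℤ) * (l * M)) = ((ζ ^ M) ^ (j : ℕ)) ^ l := by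
    rw [← pow_mul, ← pow_mul, ← zpow_natCast]
    congr 1
    push_cast
    ring
  rw [mul_add, add_comm, zpow_add₀ hζ, hshift, mul_smul]

theorem aliasing_dft {L M : ℕ} (hL : 0 < L) {ζ : K} (hζ₀ : ζ ≠ 0) (hζ : IsPrimitiveRoot (ζ ^ M) L)
    (x : Fin (L * M) → E) :
    aliasing L M (dft ζ x) = (L : K) • dft (ζ ^ L) (downsample hL x) := by
  funext k
  calc aliasing L M (dft ζ x) k
      = ∑ j : Fin (L * M), ∑ l ∈ range L, ((ζ ^ M) ^ (j : ℕ)) ^ l • ζ ^ ((j : ℤ) * k) • x j := by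
        simp only [aliasing, dft_add_mul hζ₀]
        exact sum_comm
    _ = ∑ j : Fin (L * M), if L ∣ (j : ℕ) then (L : K) • ζ ^ ((j : ℤ) * k) • x j else 0 := by
        simp only [← sum_smul, sum_range_pow_pow_primitiveRoot hζ, ite_smul, zero_smul]
    _ = ∑ m : Fin M, (L : K) • ζ ^ (((m * L : ℕ) : ℤ) * k) • downsample hL x m :=
        sum_ite_dvd_eq_sum_downsample hL _
    _ = (L : K) • dft (ζ ^ L) (downsample hL x) k := by
        rw [dft, smul_sum]
        refine sum_congr rfl fun m _ => ?_
        rw [← zpow_natCast ζ L, ← zpow_mul]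
        congr 3
        push_cast
        ring

theorem dft_downsample_eq_alias_general {L M : ℕ} (hL : 0 < L) {ζ : K} (hζ₀ : ζ ≠ 0)
    (hζ : IsPrimitiveRoot (ζ ^ M) L) (x : Fin (L * M) → E) :
    dft (ζ ^ L) (downsample hL x) = (1 / (L : K)) • aliasing L M (dft ζ x) := by
  have : NeZero L := ⟨hL.ne'⟩
  have hLK : (L : K) ≠ 0 := hζ.neZero'.ne
  rw [aliasing_dft hL hζ₀ hζ, one_div, inv_smul_smul₀ hLK]

end DFT

/-- The base `exp (-2πi / N)` of the complex discrete Fourier transform of length `N`. -/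
noncomputable def dftRoot (N : ℕ) : ℂ :=
  Complex.exp (-2 * Real.pi * Complex.I / N)

theorem isPrimitiveRoot_dftRoot {N : ℕ} (hN : N ≠ 0) : IsPrimitiveRoot (dftRoot N) N := by
  have hinv : dftRoot N = (Complex.exp (2 * Real.pi * Complex.I / N))⁻¹ := by
    rw [dftRoot, ← Complex.exp_neg]
    congr 1
    ring
  exact hinv ▸ (Complex.isPrimitiveRoot_exp N hN).inv

theorem dftRoot_mul_pow_left {L : ℕ} (hL : 0 < L) (M : ℕ) : dftRoot (L * M) ^ L = dftRoot M := by
  have hLC : (L : ℂ) ≠ 0 := Nat.cast_ne_zero.2 hL.ne'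
  rw [dftRoot, dftRoot, ← Complex.exp_nat_mul, Nat.cast_mul, mul_div_assoc',
    mul_div_mul_left _ _ hLC]

theorem isPrimitiveRoot_dftRoot_mul_pow_right {L M : ℕ} (hL : 0 < L) (hM : 0 < M) :
    IsPrimitiveRoot (dftRoot (L * M) ^ M) L := by
  rw [mul_comm, dftRoot_mul_pow_left hM]
  exact isPrimitiveRoot_dftRoot hL.ne'

theorem sum_mul_exp_eq_dft {N : ℕ} (x : Fin N → ℂ) (k : ℤ) :
    ∑ j : Fin N, x j *
      Complex.exp (-2 * (Real.pi : ℂ) * Complex.I * ((j : ℕ) : ℂ) * (k : ℂ) / (N : ℂ)) =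
      dft (dftRoot N) x k := by
  refine sum_congr rfl fun j _ => ?_
  rw [dftRoot, ← Complex.exp_int_mul, smul_eq_mul, mul_comm (x j)]
  congr 2
  push_cast
  ring

/-- **Downsampling theorem for the DFT.**
Let `N = L * M`. If `X` is the `N`-point DFT of the signal `x : Fin N → ℂ`
(viewed as a function of `k : ℤ`) and `Y` is the `M`-point DFT of the
`L`-fold downsampled signal `m ↦ x (m * L)`, then for every integer `k`,
`Y k = (1/L) * ∑_{l=0}^{L-1} X (k + l * M)`, i.e. the DFT of the downsampled
signal equals `1/L` times the `L`-fold alias of the original DFT. -/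
theorem dft_downsample_eq_alias
    (L M : ℕ) (hL : 1 ≤ L) (hM : 1 ≤ M) (N : ℕ) (hN : N = L * M)
    (x : Fin N → ℂ) (X Y : ℤ → ℂ)
    (hX : ∀ k : ℤ, X k =
      ∑ j : Fin N, x j *
        Complex.exp (-2 * (Real.pi : ℂ) * Complex.I * ((j : ℕ) : ℂ) * (k : ℂ) / (N : ℂ)))
    (hY : ∀ k : ℤ, Y k =
      ∑ m : Fin M, x ⟨(m : ℕ) * L, by nlinarith [m.isLt, hL, hN]⟩ *
        Complex.exp (-2 * (Real.pi : ℂ) * Complex.I * ((m : ℕ) : ℂ) * (k : ℂ) / (M : ℂ))) :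
    ∀ k : ℤ, Y k = (1 / (L : ℂ)) * ∑ l ∈ Finset.range L, X (k + (l : ℤ) * (M : ℤ)) := by
  subst hN
  intro k
  simp only [hX, hY, sum_mul_exp_eq_dft]
  rw [← dftRoot_mul_pow_left hL M]
  exact congrFun (dft_downsample_eq_alias_general hL (Complex.exp_ne_zero _)
    (isPrimitiveRoot_dftRoot_mul_pow_right hL hM) x) k
end

section
/- The sine function is a Tauber-Wiener function: for every pair of real numbers a < b and every continuous function f : [a,b] → ℝ and every ε > 0, there exist I ∈ ℕ and real numbers c_1,…,c_I, λ_1,…,λ_I, θ_1,…,θ_I such that |f(t) − Σ_{i=1}^{I} c_i·sin(λ_i·t + θ_i)| ≤ ε for all t ∈ [a,b]. Equivalently, the linear span of { t ↦ sin(λt + θ) : λ, θ ∈ ℝ } is dense in C([a,b], ℝ) with the supremum norm. -/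
/-!
A product of two sines is a difference of two cosines, that is, of two shifted sines. Hence the
linear span of the functions `x ↦ sin (φ x + θ)` is already closed under multiplication, and the
Stone–Weierstrass theorem applies to it.
-/

open Real

theorem strongDual_apply_eq_apply_one_mul {R : Type*} [CommSemiring R] [TopologicalSpace R]
    (φ : StrongDual R R) (t : R) : φ t = φ 1 * t := by
  simpa [mul_comm] using map_smul φ t 1

section SinRidge

variable {E : Type*} [AddCommGroup E] [Module ℝ E] [TopologicalSpace E] (K : Set E)

/-- The ridge function with profile `sin`, direction `φ` and phase `θ`, restricted to `K`.
In dimension one the direction `φ` is multiplication by the paper's `λ`. -/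
noncomputable def sinRidge (φ : StrongDual ℝ E) (θ : ℝ) : C(K, ℝ) where
  toFun x := sin (φ x + θ)

@[simp]
theorem sinRidge_apply (φ : StrongDual ℝ E) (θ : ℝ) (x : K) :
    sinRidge K φ θ x = sin (φ x + θ) :=
  rfl

theorem sinRidge_zero_pi_div_two : sinRidge K 0 (π / 2) = 1 := by
  ext x
  simp

theorem sinRidge_mul_sinRidge (φ ψ : StrongDual ℝ E) (θ η : ℝ) :
    sinRidge K φ θ * sinRidge K ψ η =
      (1 / 2 : ℝ) •
        (sinRidge K (φ - ψ) (θ - η + π / 2) - sinRidge K (φ + ψ) (θ + η + π / 2)) := by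
  ext x
  have h_sub : sinRidge K (φ - ψ) (θ - η + π / 2) x = cos ((φ x + θ) - (ψ x + η)) := by
    rw [sinRidge_apply, ← add_assoc, sin_add_pi_div_two, sub_apply, add_sub_add_comm]
  have h_add : sinRidge K (φ + ψ) (θ + η + π / 2) x = cos ((φ x + θ) + (ψ x + η)) := by
    rw [sinRidge_apply, ← add_assoc, sin_add_pi_div_two, add_apply, add_add_add_comm]
  simp only [ContinuousMap.mul_apply, ContinuousMap.smul_apply, ContinuousMap.sub_apply,
    h_sub, h_add, sinRidge_apply, smul_eq_mul]
  linarith [two_mul_sin_mul_sin (φ x + θ) (ψ x + η)]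

/-- The space of finite linear combinations of sine ridge functions on `K`. -/
noncomputable def sinRidgeSpan : Submodule ℝ C(K, ℝ) :=
  Submodule.span ℝ (Set.range fun p : StrongDual ℝ E × ℝ ↦ sinRidge K p.1 p.2)

theorem sinRidge_mem_sinRidgeSpan (φ : StrongDual ℝ E) (θ : ℝ) :
    sinRidge K φ θ ∈ sinRidgeSpan K :=
  Submodule.subset_span ⟨(φ, θ), rfl⟩

theorem one_mem_sinRidgeSpan : (1 : C(K, ℝ)) ∈ sinRidgeSpan K :=
  sinRidge_zero_pi_div_two K ▸ sinRidge_mem_sinRidgeSpan K 0 (π / 2)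

theorem mul_mem_sinRidgeSpan {f g : C(K, ℝ)} (hf : f ∈ sinRidgeSpan K)
    (hg : g ∈ sinRidgeSpan K) : f * g ∈ sinRidgeSpan K := by
  suffices h : sinRidgeSpan K * sinRidgeSpan K ≤ sinRidgeSpan K from
    h (Submodule.mul_mem_mul hf hg)
  nth_rw 1 2 [sinRidgeSpan]
  rw [Submodule.span_mul_span, Submodule.span_le]
  rintro _ ⟨_, ⟨⟨φ, θ⟩, rfl⟩, _, ⟨⟨ψ, η⟩, rfl⟩, rfl⟩
  simp only [sinRidge_mul_sinRidge]
  exact Submodule.smul_mem _ _ (Submodule.sub_mem _ (sinRidge_mem_sinRidgeSpan K _ _)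
    (sinRidge_mem_sinRidgeSpan K _ _))

theorem exists_sum_of_mem_sinRidgeSpan {g : C(K, ℝ)} (hg : g ∈ sinRidgeSpan K) :
    ∃ (I : ℕ) (c : Fin I → ℝ) (φ : Fin I → StrongDual ℝ E) (θ : Fin I → ℝ),
      ∀ x : K, g x = ∑ i, c i * sin (φ i x + θ i) := by
  obtain ⟨I, c, v, rfl⟩ := Submodule.mem_span_set'.1 hg
  choose p hp using fun i ↦ (v i).2
  exact ⟨I, c, fun i ↦ (p i).1, fun i ↦ (p i).2, fun x ↦ by simp [← hp]⟩

/-- `sinRidgeSpan` as a subalgebra, the form in which Stone–Weierstrass applies to it. -/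
noncomputable def sinRidgeSubalgebra : Subalgebra ℝ C(K, ℝ) :=
  (sinRidgeSpan K).toSubalgebra (one_mem_sinRidgeSpan K) fun _ _ ↦ mul_mem_sinRidgeSpan K

theorem separatesPoints_sinRidgeSubalgebra [SeparatingDual ℝ E] :
    (sinRidgeSubalgebra K).SeparatesPoints := by
  intro x y hxy
  obtain ⟨φ, hφ⟩ : ∃ φ : StrongDual ℝ E, φ (y - x) = 1 :=
    SeparatingDual.exists_eq_one (sub_ne_zero.2 (Subtype.coe_ne_coe.2 hxy.symm))
  refine ⟨_, ⟨sinRidge K φ (-φ x), sinRidge_mem_sinRidgeSpan K _ _, rfl⟩, ?_⟩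
  have hx : sinRidge K φ (-φ x) x = 0 := by simp
  have hy : sinRidge K φ (-φ x) y = sin 1 := by
    rw [sinRidge_apply, ← sub_eq_add_neg, ← map_sub, hφ]
  simpa only [hx, hy] using (sin_pos_of_pos_of_le_one one_pos le_rfl).ne

end SinRidge

theorem sin_isTauberWiener_general {E : Type*} [AddCommGroup E] [Module ℝ E] [TopologicalSpace E]
    [SeparatingDual ℝ E] {K : Set E} (hK : IsCompact K) {f : E → ℝ} (hf : ContinuousOn f K)
    {ε : ℝ} (hε : 0 < ε) :
    ∃ (I : ℕ) (c : Fin I → ℝ) (φ : Fin I → StrongDual ℝ E) (θ : Fin I → ℝ),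
      ∀ x ∈ K, |f x - ∑ i, c i * sin (φ i x + θ i)| ≤ ε := by
  have : CompactSpace K := isCompact_iff_compactSpace.1 hK
  obtain ⟨⟨g, hg⟩, hgf⟩ :=
    ContinuousMap.exists_mem_subalgebra_near_continuous_of_separatesPoints
      (sinRidgeSubalgebra K) (separatesPoints_sinRidgeSubalgebra K) _ hf.domRestrict ε hε
  obtain ⟨I, c, φ, θ, hsum⟩ := exists_sum_of_mem_sinRidgeSpan K hg
  refine ⟨I, c, φ, θ, fun x hx ↦ ?_⟩
  rw [← hsum ⟨x, hx⟩, abs_sub_comm]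
  exact (hgf ⟨x, hx⟩).le

/-- **`sin` is a Tauber-Wiener function.**
For every interval `[a,b]` (with `a < b`), every continuous function
`f` on `[a,b]`, and every `ε > 0`, there is a finite linear combination
`∑ i, c i * sin (λ i * t + θ i)` uniformly within `ε` of `f` on `[a,b]`;
i.e. the span of `{t ↦ sin (λ t + θ)}` is dense in `C([a,b], ℝ)`. -/
theorem sin_isTauberWiener :
    ∀ a b : ℝ, a < b → ∀ f : ℝ → ℝ, ContinuousOn f (Set.Icc a b) →
      ∀ ε : ℝ, 0 < ε →
        ∃ (I : ℕ) (c lam θ : Fin I → ℝ),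
          ∀ t ∈ Set.Icc a b,
            |f t - ∑ i, c i * Real.sin (lam i * t + θ i)| ≤ ε := by
  intro a b _ f hf ε hε
  obtain ⟨I, c, φ, θ, h⟩ := sin_isTauberWiener_general isCompact_Icc hf hε
  exact ⟨I, c, fun i ↦ φ i 1, θ, by simpa only [← strongDual_apply_eq_apply_one_mul] using h⟩
end

section
/- Let σ : ℝ → ℝ be a Tauber-Wiener function, i.e., for every a < b the linear span of { t ↦ σ(λt + θ) : λ, θ ∈ ℝ } is dense in C([a,b], ℝ) with the supremum norm. Let d ≥ 1, let K₁ ⊂ ℝ^d be compact, let V be a compact subset of C(K₁, ℝ) (with the supremum norm), and let f : V → ℝ be a continuous functional. Then for every ε > 0 there exist m, M ∈ ℕ, points x_1,…,x_m ∈ K₁, and real numbers c_i, θ_i (1 ≤ i ≤ M) and ξ_{ij} (1 ≤ i ≤ M, 1 ≤ j ≤ m), all independent of u, such that |f(u) − Σ_{i=1}^{M} c_i·σ( Σ_{j=1}^{m} ξ_{ij}·u(x_j) + θ_i )| ≤ ε for all u ∈ V. -/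
/-- A function `σ : ℝ → ℝ` is Tauber-Wiener if for every interval `[a,b]`
the linear span of `{t ↦ σ (λ t + θ) : λ, θ ∈ ℝ}` is dense in
`C([a,b], ℝ)` with the supremum norm. -/
def IsTauberWiener (σ : ℝ → ℝ) : Prop :=
  ∀ a b : ℝ, a < b → ∀ f : ℝ → ℝ, ContinuousOn f (Set.Icc a b) →
    ∀ ε : ℝ, 0 < ε →
      ∃ (I : ℕ) (c lam θ : Fin I → ℝ),
        ∀ t ∈ Set.Icc a b, |f t - ∑ i, c i * σ (lam i * t + θ i)| ≤ ε

/-!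
Exponentials of linear combinations of sensors are closed under multiplication, so their linear span
is an algebra. It is dense by Stone–Weierstrass as soon as the sensors separate points. On a compact
space `Y` each such linear combination has bounded range, so the Tauber–Wiener property approximates
its exponential by neurons in one variable. Since `σ` need not be continuous, the closure is taken
in `Y →ᵤ ℝ`, the space of all functions with uniform convergence, in which `C(Y, ℝ)` embeds
isometrically.
-/

open UniformConvergence UniformFun

theorem ofFun_mem_closure_iff {α β : Type*} [PseudoMetricSpace β] {N : Set (α →ᵤ β)} {f : α → β} :
    ofFun f ∈ closure N ↔ ∀ ε > 0, ∃ h ∈ N, ∀ x, dist (f x) (toFun h x) ≤ ε :=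
  mem_closure_iff_nhds_basis <|
    UniformFun.hasBasis_nhds_of_basis α β (ofFun f) Metric.uniformity_basis_dist_le

theorem toFun_sum_smul_apply {R α β κ : Type*} [Semiring R] [AddCommMonoid β] [Module R β]
    [Fintype κ] (c : κ → R) (h : κ → α →ᵤ β) (x : α) :
    toFun (∑ i, c i • h i) x = ∑ i, c i • toFun (h i) x :=
  Finset.sum_apply (M := fun _ => β) x Finset.univ fun i => c i • toFun (h i)

theorem exists_fin_forall_eq_sum_of_mem_span_range {R M ι κ : Type*} [Semiring R] [AddCommMonoid M]
    [Module R M] [Finite κ] {φ : ι → M} {v : κ → M}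
    (hv : ∀ k, v k ∈ Submodule.span R (Set.range φ)) :
    ∃ (m : ℕ) (x : Fin m → ι) (ξ : κ → Fin m → R), ∀ k, v k = ∑ j, ξ k j • φ (x j) := by
  classical
  cases nonempty_fintype κ
  choose a ha using fun k => Finsupp.mem_span_range_iff_exists_finsupp.1 (hv k)
  let s : Finset ι := Finset.univ.biUnion fun k => (a k).support
  have support_subset (k : κ) : (a k).support ⊆ s :=
    Finset.subset_biUnion_of_mem (fun k => (a k).support) (Finset.mem_univ k)
  refine ⟨s.card, fun j => s.equivFin.symm j, fun k j => a k (s.equivFin.symm j), fun k => ?_⟩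
  calc
    v k = ∑ i ∈ s, a k i • φ i := by
      rw [← ha k, Finsupp.sum_of_support_subset _ (support_subset k) _ (by simp)]
    _ = ∑ i : s, a k i • φ i := (s.sum_coe_sort fun i => a k i • φ i).symm
    _ = ∑ j, a k (s.equivFin.symm j) • φ (s.equivFin.symm j) :=
      (s.equivFin.symm.sum_comp fun i : s => a k i • φ i).symm

section Networks

variable {Y : Type*} [TopologicalSpace Y]

/-- The exponentials of an additive monoid of continuous functions, as a multiplicative monoid. Its
linear span is the algebra to which Stone–Weierstrass is applied. -/
noncomputable def expSubmonoid (L : AddSubmonoid C(Y, ℝ)) : Submonoid C(Y, ℝ) where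
  carrier := (fun ℓ => (⟨Real.exp, Real.continuous_exp⟩ : C(ℝ, ℝ)).comp ℓ) '' L
  one_mem' := ⟨0, L.zero_mem, by ext; simp⟩
  mul_mem' := by
    rintro _ _ ⟨ℓ, hℓ, rfl⟩ ⟨ℓ', hℓ', rfl⟩
    exact ⟨ℓ + ℓ', L.add_mem hℓ hℓ', by ext; simp [Real.exp_add]⟩

/-- The two-layer networks `∑ i, c i * σ (ℓ i + θ i)` with activation `σ` and inner functions `ℓ i`
in `L`. They form a space of arbitrary functions, as `σ` need not be continuous. -/
def networkSpace (σ : ℝ → ℝ) (L : Submodule ℝ C(Y, ℝ)) : Submodule ℝ (Y →ᵤ ℝ) :=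
  Submodule.span ℝ {h | ∃ ℓ ∈ L, ∃ θ : ℝ, h = ofFun fun y => σ (ℓ y + θ)}

theorem exists_eq_sum_of_mem_networkSpace_span {ι : Type*} {σ : ℝ → ℝ} {φ : ι → C(Y, ℝ)}
    {h : Y →ᵤ ℝ} (hh : h ∈ networkSpace σ (Submodule.span ℝ (Set.range φ))) :
    ∃ (m M : ℕ) (x : Fin m → ι) (c θ : Fin M → ℝ) (ξ : Fin M → Fin m → ℝ),
      ∀ y, toFun h y = ∑ i, c i * σ (∑ j, ξ i j * φ (x j) y + θ i) := by
  obtain ⟨M, c, neuron, rfl⟩ := Submodule.mem_span_set'.1 hh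
  choose ℓ hℓ θ hneuron using fun i => (neuron i).2
  obtain ⟨m, x, ξ, hξ⟩ := exists_fin_forall_eq_sum_of_mem_span_range hℓ
  refine ⟨m, M, x, c, θ, ξ, fun y => ?_⟩
  simp [toFun_sum_smul_apply, hneuron, hξ]

variable [CompactSpace Y]

theorem topologicalClosure_span_submonoid_eq_top_of_separatesPoints {S : Submonoid C(Y, ℝ)}
    (hS : ∀ y z, y ≠ z → ∃ g ∈ S, g y ≠ g z) :
    (Submodule.span ℝ (S : Set C(Y, ℝ))).topologicalClosure = ⊤ := by
  have separates : (Algebra.adjoin ℝ (S : Set C(Y, ℝ))).SeparatesPoints := fun y z hyz =>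
    let ⟨g, hg, hne⟩ := hS y z hyz
    ⟨g, ⟨g, Algebra.subset_adjoin hg, rfl⟩, hne⟩
  have span_eq : (Algebra.adjoin ℝ (S : Set C(Y, ℝ))).toSubmodule = Submodule.span ℝ S := by
    rw [Algebra.adjoin_eq_span, Submonoid.closure_eq]
  rw [← span_eq]
  exact Submodule.eq_top_iff'.2
    (ContinuousMap.continuousMap_mem_subalgebra_closure_of_separatesPoints _ separates)

theorem IsTauberWiener.ofFun_comp_mem_closure_networkSpace {σ : ℝ → ℝ} (hσ : IsTauberWiener σ)
    {L : Submodule ℝ C(Y, ℝ)} {ℓ : C(Y, ℝ)} (hℓ : ℓ ∈ L) {g : ℝ → ℝ} (hg : Continuous g) :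
    ofFun (g ∘ ℓ) ∈ (networkSpace σ L).topologicalClosure := by
  refine ofFun_mem_closure_iff.2 fun ε hε => ?_
  obtain ⟨I, c, lam, θ, hI⟩ := hσ (-(‖ℓ‖ + 1)) (‖ℓ‖ + 1) (by linarith [norm_nonneg ℓ]) g
    hg.continuousOn ε hε
  refine ⟨∑ i, c i • ofFun fun y => σ ((lam i • ℓ) y + θ i), ?_, fun y => ?_⟩
  · exact Submodule.sum_mem _ fun i _ => Submodule.smul_mem _ _ <|
      Submodule.subset_span ⟨lam i • ℓ, L.smul_mem _ hℓ, θ i, rfl⟩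
  · have hy : ℓ y ∈ Set.Icc (-(‖ℓ‖ + 1)) (‖ℓ‖ + 1) :=
      abs_le.1 <| (ℓ.norm_coe_le_norm y).trans (by linarith)
    simpa [toFun_sum_smul_apply, Real.dist_eq] using hI (ℓ y) hy

theorem IsTauberWiener.ofFun_mem_closure_networkSpace {σ : ℝ → ℝ} (hσ : IsTauberWiener σ)
    {L : Submodule ℝ C(Y, ℝ)} (hL : ∀ y z, y ≠ z → ∃ ℓ ∈ L, ℓ y ≠ ℓ z) (f : C(Y, ℝ)) :
    ofFun f ∈ (networkSpace σ L).topologicalClosure := by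
  let toUniform : C(Y, ℝ) →L[ℝ] (Y →ᵤ ℝ) :=
    { toFun := fun g => ofFun g
      map_add' := fun _ _ => rfl
      map_smul' := fun _ _ => rfl
      cont := isometry_ofFun_continuousMap.continuous }
  let E : Submonoid C(Y, ℝ) := expSubmonoid L.toAddSubmonoid
  have exp_dense : (Submodule.span ℝ (E : Set C(Y, ℝ))).topologicalClosure = ⊤ := by
    refine topologicalClosure_span_submonoid_eq_top_of_separatesPoints fun y z hyz => ?_
    obtain ⟨ℓ, hℓ, hne⟩ := hL y z hyz
    exact ⟨_, ⟨ℓ, hℓ, rfl⟩, Real.exp_injective.ne hne⟩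
  have span_exp_le : Submodule.span ℝ (E : Set C(Y, ℝ)) ≤
      (networkSpace σ L).topologicalClosure.comap (toUniform : C(Y, ℝ) →ₗ[ℝ] (Y →ᵤ ℝ)) := by
    rw [Submodule.span_le]
    rintro _ ⟨ℓ, hℓ, rfl⟩
    exact hσ.ofFun_comp_mem_closure_networkSpace hℓ Real.continuous_exp
  have closure_le := Submodule.topologicalClosure_minimal _ span_exp_le
    ((networkSpace σ L).isClosed_topologicalClosure.preimage toUniform.continuous)
  exact closure_le (exp_dense ▸ Submodule.mem_top)

theorem branch_net_uniform_approximation_of_functionals_general {ι : Type*}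
    {σ : ℝ → ℝ} (hσ : IsTauberWiener σ)
    {φ : ι → C(Y, ℝ)} (hφ : ∀ y z, y ≠ z → ∃ i, φ i y ≠ φ i z)
    {f : Y → ℝ} (hf : Continuous f) {ε : ℝ} (hε : 0 < ε) :
    ∃ (m M : ℕ) (xs : Fin m → ι) (c θ : Fin M → ℝ) (ξ : Fin M → Fin m → ℝ),
      ∀ y, |f y - ∑ i, c i * σ (∑ j, ξ i j * φ (xs j) y + θ i)| ≤ ε := by
  have separates (y z : Y) (hyz : y ≠ z) :
      ∃ ℓ ∈ Submodule.span ℝ (Set.range φ), ℓ y ≠ ℓ z :=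
    (hφ y z hyz).imp' φ fun i hi => ⟨Submodule.subset_span ⟨i, rfl⟩, hi⟩
  obtain ⟨h, hh, hfh⟩ := ofFun_mem_closure_iff.1
    (hσ.ofFun_mem_closure_networkSpace separates ⟨f, hf⟩) ε hε
  obtain ⟨m, M, xs, c, θ, ξ, h_eq⟩ := exists_eq_sum_of_mem_networkSpace_span hh
  exact ⟨m, M, xs, c, θ, ξ, fun y => h_eq y ▸ hfh y⟩

end Networks

/-- **Uniform approximation of continuous functionals (branch net).**
Let `σ` be Tauber-Wiener, `K₁ ⊂ ℝᵈ` compact, `V` a compact subset of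
`C(K₁, ℝ)`, and `f : V → ℝ` a continuous functional. For every `ε > 0`
there exist `m, M`, sensor points `x 1, …, x m ∈ K₁`, and reals
`c i, θ i, ξ i j` — all independent of `u` — such that
`|f u − ∑ i, c i * σ (∑ j, ξ i j * u (x j) + θ i)| ≤ ε` for all `u ∈ V`. -/
theorem branch_net_uniform_approximation_of_functionals
    (σ : ℝ → ℝ) (hσ : IsTauberWiener σ)
    (d : ℕ) (hd : 1 ≤ d)
    (K₁ : Set (EuclideanSpace ℝ (Fin d))) (hK₁ : IsCompact K₁)
    (V : Set C(K₁, ℝ)) (hV : IsCompact V)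
    (f : V → ℝ) (hf : Continuous f)
    (ε : ℝ) (hε : 0 < ε) :
    ∃ (m M : ℕ) (xs : Fin m → K₁) (c θ : Fin M → ℝ) (ξ : Fin M → Fin m → ℝ),
      ∀ u : V,
        |f u - ∑ i, c i * σ (∑ j, ξ i j * (u : C(K₁, ℝ)) (xs j) + θ i)| ≤ ε := by
  have := isCompact_iff_compactSpace.1 hV
  exact branch_net_uniform_approximation_of_functionals_general hσ
    (φ := fun x => ⟨fun u : V => (u : C(K₁, ℝ)) x, by fun_prop⟩)
    (fun _ _ huv => DFunLike.ne_iff.1 (Subtype.coe_ne_coe.2 huv)) hf hε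
end
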